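/- Let K be a field of characteristic zero, n ≥ 1, and let Γ be a subgroup of GL_n(K) all of whose elements are semi-simple (an anisotropic linear group). If Γ is virtually solvable, then Γ is virtually abelian. -/

import Mathlib

open Matrix

/-- An element of `GL n K` is semi-simple if the corresponding linear endomorphism
of `K^n` is a semisimple endomorphism. -/
def IsSemisimpleElt {n : ℕ} {K : Type*} [Field K] (g : GL (Fin n) K) : Prop :=
  Module.End.IsSemisimple ((g : Matrix (Fin n) (Fin n) K).mulVecLin)

/-- A group is virtually solvable if it has a solvable subgroup of finite index. -/
def IsVirtuallySolvable (G : Type*) [Group G] : Prop :=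
  ∃ H : Subgroup G, H.FiniteIndex ∧ IsSolvable ↥H

/-- A group is virtually abelian if it has an abelian subgroup of finite index. -/
def IsVirtuallyAbelian (G : Type*) [Group G] : Prop :=
  ∃ H : Subgroup G, H.FiniteIndex ∧ ∀ x y : ↥H, x * y = y * x

/-!
Semisimplicity enters only through the fact that no element other than `1` is unipotent, and this
suffices over any field.

The key step is that `G` is virtually abelian as soon as its commutator subgroup is; induction on
the derived length does the rest. The FC-center of a linear group is centralized by a subgroup of
finite index, because finitely many of its elements span its image, so it yields a characteristic
abelian subgroup `N` of finite index in the commutator subgroup, which is normal in `G`. Conjugates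
of `s ∈ N` lie in `N` and are roots of the minimal polynomial of `s`, which has finitely many roots
in `N`: modulo nilpotents, harmless by unipotent-freeness, the algebra generated by `N` is a finite
product of fields. Hence the centralizer `C` of `N` has finite index in `G`, and its center meets
its commutator subgroup in finite index. A central product of commutators has determinant `1` on
each of its eigenspaces, so its eigenvalues are roots of unity of bounded order; only finitely many
central elements satisfy this. Thus the commutator subgroup of `C` is finite, every conjugacy class
of `C` is finite, and `C` is virtually abelian.
-/

open Polynomial TensorProduct

section FCCenter

variable {G : Type*} [Group G]

theorem finiteIndex_centralizer_singleton_of_finite_conjugatesOf {g : G}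
    (h : (conjugatesOf g).Finite) : (Subgroup.centralizer {g}).FiniteIndex := by
  have horbit : MulAction.orbit (ConjAct G) g = conjugatesOf g :=
    Set.ext fun _ => ConjAct.mem_orbit_conjAct.trans isConj_comm
  have hconj : (Subgroup.centralizer {ConjAct.toConjAct g}).FiniteIndex := by
    rw [← ConjAct.stabilizer_eq_centralizer, Subgroup.finiteIndex_iff, MulAction.index_stabilizer,
      horbit]
    exact ((Set.ncard_pos h).2 ⟨g, mem_conjugatesOf_self⟩).ne'
  exact hconj

variable (G) in
/-- The FC-center of a group: the subgroup of the elements with finitely many conjugates, encoded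
as the elements whose centralizer has finite index. -/
def fcCenter : Subgroup G where
  carrier := {g | (Subgroup.centralizer {g}).FiniteIndex}
  one_mem' := by
    rw [Set.mem_ofPred_eq, Subgroup.centralizer_eq_top_iff_subset.2 (by simp [one_mem])]
    infer_instance
  mul_mem' {a b} (ha : Subgroup.FiniteIndex _) (hb : Subgroup.FiniteIndex _) :=
    Subgroup.finiteIndex_of_le (H := Subgroup.centralizer {a} ⊓ Subgroup.centralizer {b})
      fun x hx => by
        simp only [Subgroup.mem_inf, Subgroup.mem_centralizer_singleton_iff] at hx ⊢
        exact Commute.mul_right hx.1 hx.2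
  inv_mem' {a} (ha : Subgroup.FiniteIndex _) :=
    Subgroup.finiteIndex_of_le (H := Subgroup.centralizer {a}) fun x hx => by
      rw [Subgroup.mem_centralizer_singleton_iff] at hx ⊢
      exact Commute.inv_right hx

theorem mem_fcCenter {g : G} : g ∈ fcCenter G ↔ (Subgroup.centralizer {g}).FiniteIndex :=
  Iff.rfl

instance characteristic_fcCenter : (fcCenter G).Characteristic := by
  refine Subgroup.characteristic_iff_le_comap.2 fun φ g hg => ?_
  rw [mem_fcCenter] at hg
  have hmap : ((Subgroup.centralizer {g}).map (φ : G →* G)).FiniteIndex := by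
    rw [Subgroup.finiteIndex_iff, Subgroup.index_map_equiv]
    exact hg.index_ne_zero
  refine Subgroup.finiteIndex_of_le (H := (Subgroup.centralizer {g}).map (φ : G →* G)) ?_
  simpa using Subgroup.map_centralizer_le_centralizer_image {g} (φ : G →* G)

theorem centralizer_le_fcCenter {H : Subgroup G} [H.FiniteIndex] :
    Subgroup.centralizer (H : Set G) ≤ fcCenter G := fun _ hx =>
  Subgroup.finiteIndex_of_le (H := H) fun h hh =>
    Subgroup.mem_centralizer_singleton_iff.2 (Subgroup.mem_centralizer_iff.1 hx h hh)

theorem fcCenter_eq_top_of_finite_commutator [Finite (commutator G)] : fcCenter G = ⊤ := by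
  refine eq_top_iff.2 fun s _ => finiteIndex_centralizer_singleton_of_finite_conjugatesOf ?_
  refine ((Set.toFinite (commutator G : Set G)).image (· * s)).subset fun x hx => ?_
  obtain ⟨g, rfl⟩ := isConj_iff.1 hx
  have hcomm : g * s * g⁻¹ * s⁻¹ ∈ commutator G :=
    Subgroup.commutator_mem_commutator (Subgroup.mem_top g) (Subgroup.mem_top s)
  exact ⟨_, hcomm, inv_mul_cancel_right _ _⟩

end FCCenter

section VirtuallyAbelian

variable {G : Type*} [Group G]

theorem IsVirtuallyAbelian.of_finiteIndex {H : Subgroup G} [H.FiniteIndex]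
    (h : IsVirtuallyAbelian H) : IsVirtuallyAbelian G := by
  obtain ⟨A, hA, hcomm⟩ := h
  refine ⟨A.map H.subtype, ⟨?_⟩, ?_⟩
  · rw [Subgroup.index_map_subtype]
    exact mul_ne_zero hA.index_ne_zero Subgroup.FiniteIndex.index_ne_zero
  · rintro ⟨_, a, ha, rfl⟩ ⟨_, b, hb, rfl⟩
    have := congrArg (fun x : A => (x : G)) (hcomm ⟨a, ha⟩ ⟨b, hb⟩)
    exact Subtype.ext this

theorem IsVirtuallyAbelian.finiteIndex_fcCenter (h : IsVirtuallyAbelian G) :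
    (fcCenter G).FiniteIndex := by
  obtain ⟨A, hA, hcomm⟩ := h
  refine Subgroup.finiteIndex_of_le (H := A) (le_trans ?_ (centralizer_le_fcCenter (H := A)))
  exact Subgroup.le_centralizer_iff_isMulCommutative.2 ⟨⟨hcomm⟩⟩

end VirtuallyAbelian

section FaithfulLinear

variable {R A G : Type*} [CommSemiring R] [Semiring A] [Algebra R A] [Group G]

theorem centralizer_le_centralizer_of_image_subset_span {ρ : G →* A} (hρ : Function.Injective ρ)
    {S T : Set G} (h : ρ '' S ⊆ Submodule.span R (ρ '' T)) :
    Subgroup.centralizer T ≤ Subgroup.centralizer S := by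
  intro g hg
  have hspan : Submodule.span R (ρ '' T) ≤
      Subalgebra.toSubmodule (Subalgebra.centralizer R {ρ g}) := by
    rw [Submodule.span_le]
    rintro _ ⟨t, ht, rfl⟩ _ rfl
    rw [← map_mul, ← map_mul, Subgroup.mem_centralizer_iff.1 hg t ht]
  refine Subgroup.mem_centralizer_iff.2 fun s hs => hρ ?_
  rw [map_mul, map_mul]
  exact (hspan (h ⟨s, hs, rfl⟩) (ρ g) rfl).symm

variable (R) in
theorem finiteIndex_centralizer_of_subset_fcCenter [IsNoetherian R A] {ρ : G →* A}
    (hρ : Function.Injective ρ) {S : Set G} (hS : S ⊆ fcCenter G) :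
    (Subgroup.centralizer S).FiniteIndex := by
  obtain ⟨T', hT', hspan⟩ := (Submodule.fg_span_iff_fg_span_finset_subset (R := R) (ρ '' S)).1
    (IsNoetherian.noetherian _)
  obtain ⟨T, hTS, hT⟩ := Set.subset_image_iff.1 hT'
  have hTfin : Finite T := (hT ▸ T'.finite_toSet).of_finite_image hρ.injOn
  have hTindex : (Subgroup.centralizer T).FiniteIndex := by
    rw [Subgroup.centralizer_eq_iInf, iInf_subtype']
    exact Subgroup.finiteIndex_iInf fun t => hS (hTS t.2)
  refine Subgroup.finiteIndex_of_le (H := Subgroup.centralizer T)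
    (centralizer_le_centralizer_of_image_subset_span (R := R) hρ ?_)
  rw [hT, ← hspan]
  exact Submodule.subset_span

variable (R) in
theorem exists_characteristic_isMulCommutative_of_finiteIndex_fcCenter [IsNoetherian R A]
    {ρ : G →* A} (hρ : Function.Injective ρ) [(fcCenter G).FiniteIndex] :
    ∃ N : Subgroup G, N.Characteristic ∧ N.FiniteIndex ∧ IsMulCommutative N := by
  refine ⟨Subgroup.centralizer (fcCenter G), inferInstance,
    finiteIndex_centralizer_of_subset_fcCenter R hρ subset_rfl, ?_⟩
  rw [← Subgroup.le_centralizer_iff_isMulCommutative]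
  exact Subgroup.centralizer_le centralizer_le_fcCenter

variable (R) in
theorem exists_normal_isMulCommutative_isFiniteRelIndex [IsNoetherian R A] {ρ : G →* A}
    (hρ : Function.Injective ρ) {D : Subgroup G} [D.Normal] (hD : IsVirtuallyAbelian D) :
    ∃ N : Subgroup G, N.Normal ∧ IsMulCommutative N ∧ N.IsFiniteRelIndex D := by
  have := hD.finiteIndex_fcCenter
  obtain ⟨N, hchar, hindex, hcomm⟩ :=
    exists_characteristic_isMulCommutative_of_finiteIndex_fcCenter R
      (ρ := ρ.comp D.subtype) (hρ.comp D.subtype_injective)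
  refine ⟨N.map D.subtype, inferInstance, inferInstance, ?_⟩
  rw [Subgroup.isFiniteRelIndex_iff_relIndex_ne_zero, Subgroup.relIndex, ← Subgroup.comap_subtype,
    Subgroup.comap_map_eq_self_of_injective D.subtype_injective]
  exact hindex.index_ne_zero

end FaithfulLinear

section UnipotentFree

/-- A homomorphism from a group to the multiplicative monoid of a ring is unipotent-free if only
the identity is sent to a unipotent element. Such a homomorphism is injective; every faithful
representation by semisimple endomorphisms is unipotent-free. -/
def IsUnipotentFree {G A : Type*} [Group G] [Ring A] (ρ : G →* A) : Prop :=
  ∀ g, IsNilpotent (ρ g - 1) → g = 1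

variable {G A : Type*} [Group G]

theorem IsUnipotentFree.injective [Ring A] {ρ : G →* A} (hρ : IsUnipotentFree ρ) :
    Function.Injective ρ :=
  (injective_iff_map_eq_one ρ).2 fun g hg => hρ g (by simp [hg])

theorem IsUnipotentFree.comp_injective [Ring A] {ρ : G →* A} (hρ : IsUnipotentFree ρ)
    {H : Type*} [Group H] {f : H →* G} (hf : Function.Injective f) :
    IsUnipotentFree (ρ.comp f) := fun h hh =>
  hf ((hρ (f h) hh).trans f.map_one.symm)

theorem isUnipotentFree_of_isSemisimple {R M : Type*} [CommRing R] [AddCommGroup M] [Module R M]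
    {ρ : G →* Module.End R M} (hρ : Function.Injective ρ) (hss : ∀ g, (ρ g).IsSemisimple) :
    IsUnipotentFree ρ := by
  intro g hg
  have hsub : (ρ g - 1).IsSemisimple := by
    simpa using (Module.End.isSemisimple_sub_algebraMap_iff (μ := (1 : R))).2 (hss g)
  have hone : ρ g = 1 :=
    sub_eq_zero.1 (Module.End.eq_zero_of_isNilpotent_isSemisimple hg hsub)
  exact hρ (hone.trans ρ.map_one.symm)

theorem IsUnipotentFree.eq_of_isNilpotent_sub [CommRing A] {ρ : G →* A} (hρ : IsUnipotentFree ρ)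
    {g h : G} (hgh : IsNilpotent (ρ g - ρ h)) : g = h := by
  have hdiv : ρ (g * h⁻¹) - 1 = (ρ g - ρ h) * ρ h⁻¹ := by
    rw [sub_mul, ← map_mul, ← map_mul, mul_inv_cancel, map_one]
  refine mul_inv_eq_one.1 (hρ _ ?_)
  rw [hdiv]
  exact (Commute.all _ _).isNilpotent_mul_right hgh

end UnipotentFree

section PolynomialRoots

variable {K A G : Type*} [Field K]

theorem finite_setOf_aeval_eq_zero_of_isReduced [CommRing A] [Algebra K A] [IsArtinianRing A]
    [IsReduced A] {p : K[X]} (hp : p ≠ 0) : {x : A | aeval x p = 0}.Finite := by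
  have hfactor (I : MaximalSpectrum A) : {y : A ⧸ I.asIdeal | aeval y p = 0}.Finite := by
    let _ : Field (A ⧸ I.asIdeal) := Ideal.Quotient.field I.asIdeal
    exact (p.rootSet_finite (A ⧸ I.asIdeal)).subset fun y hy => (mem_rootSet_of_ne hp).2 hy
  refine .of_finite_image ((Set.Finite.pi' hfactor).subset ?_)
    (IsArtinianRing.equivPi A).injective.injOn
  rintro _ ⟨x, hx : aeval x p = 0, rfl⟩ I
  change aeval (Ideal.Quotient.mkₐ K I.asIdeal x) p = 0
  rw [aeval_algHom_apply, hx, map_zero]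

variable [Group G]

theorem IsUnipotentFree.finite_setOf_aeval_eq_zero_of_commRing [CommRing A] [Algebra K A]
    [FiniteDimensional K A] {ρ : G →* A} (hρ : IsUnipotentFree ρ) {p : K[X]} (hp : p ≠ 0) :
    {g : G | aeval (ρ g) p = 0}.Finite := by
  have : IsArtinianRing A := .of_finite K A
  have : IsReduced (A ⧸ nilradical A) :=
    (Ideal.isRadical_iff_quotient_reduced _).1 (Ideal.radical_isRadical ⊥)
  refine Set.Finite.of_injOn (f := fun g => Ideal.Quotient.mkₐ K (nilradical A) (ρ g)) ?_ ?_
    (finite_setOf_aeval_eq_zero_of_isReduced (A := A ⧸ nilradical A) hp)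
  · intro g (hg : aeval (ρ g) p = 0)
    rw [Set.mem_ofPred_eq, aeval_algHom_apply, hg, map_zero]
  · exact fun g _ h _ hgh => hρ.eq_of_isNilpotent_sub (Ideal.Quotient.eq.1 hgh)

open scoped IsMulCommutative in
theorem IsUnipotentFree.finite_setOf_aeval_eq_zero [Ring A] [Algebra K A] [FiniteDimensional K A]
    [IsMulCommutative G] {ρ : G →* A} (hρ : IsUnipotentFree ρ) {p : K[X]} (hp : p ≠ 0) :
    {g : G | aeval (ρ g) p = 0}.Finite := by
  have : IsMulCommutative (Algebra.adjoin K (Set.range ρ)) :=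
    Algebra.isMulCommutative_adjoin K <| by
      rintro _ ⟨g, rfl⟩ _ ⟨h, rfl⟩
      rw [← map_mul, ← map_mul, mul_comm' g h]
  let σ : G →* Algebra.adjoin K (Set.range ρ) :=
    ρ.codRestrict _ fun g => Algebra.subset_adjoin ⟨g, rfl⟩
  have hσ : IsUnipotentFree σ := fun g hg =>
    hρ g (hg.map (Algebra.adjoin K (Set.range ρ)).val)
  refine (hσ.finite_setOf_aeval_eq_zero_of_commRing hp).subset fun g hg => ?_
  refine Subtype.val_injective ?_
  exact (aeval_algHom_apply (Algebra.adjoin K (Set.range ρ)).val (σ g) p).symm.trans hg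

theorem minpoly_eq_of_isConj {R : Type*} [CommRing R] [Ring A] [Algebra R A] {x y : A}
    (h : IsConj x y) : minpoly R x = minpoly R y := by
  obtain ⟨u, hu⟩ := h
  have hy : y = MulSemiringAction.toAlgEquiv R A (ConjAct.toConjAct u) x := by
    simp [ConjAct.units_smul_def, hu.eq]
  rw [hy, minpoly.algEquiv_eq]

variable (K) in
theorem IsUnipotentFree.le_fcCenter_of_normal [Ring A] [Algebra K A] [FiniteDimensional K A]
    {ρ : G →* A} (hρ : IsUnipotentFree ρ) {N : Subgroup G} [N.Normal] [IsMulCommutative N] :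
    N ≤ fcCenter G := by
  intro s hs
  have hroots := (hρ.comp_injective N.subtype_injective).finite_setOf_aeval_eq_zero
    (minpoly.ne_zero (Algebra.IsIntegral.isIntegral (R := K) (ρ s)))
  refine finiteIndex_centralizer_singleton_of_finite_conjugatesOf
    ((hroots.image N.subtype).subset fun x hx => ?_)
  have hxN : x ∈ N := Group.conjugates_subset_normal hs hx
  refine ⟨⟨x, hxN⟩, ?_, rfl⟩
  rw [Set.mem_ofPred_eq, minpoly_eq_of_isConj (ρ.map_isConj hx)]
  exact minpoly.aeval K (ρ x)

end PolynomialRoots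

section CentralCommutators

open Module

variable {K V G : Type*} [Field K] [AddCommGroup V] [Module K V] [Group G]

theorem pow_finrank_eigenspace_eq_one (ρ : Representation K G V) {z : G}
    (hcenter : z ∈ Subgroup.center G) (hcomm : z ∈ commutator G) (μ : K) :
    μ ^ finrank K (End.eigenspace (ρ z) μ) = 1 := by
  have hcommute (g : G) : Commute (ρ z) (ρ g) :=
    Commute.map (show Commute z g from (Subgroup.mem_center_iff.1 hcenter g).symm) ρ
  have hinv (g : G) : End.eigenspace (ρ z) μ ≤ (End.eigenspace (ρ z) μ).comap (ρ g) :=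
    fun _ hw => End.mapsTo_genEigenspace_of_comm (hcommute g) μ 1 hw
  let σ := ρ.subrepresentation (End.eigenspace (ρ z) μ) hinv
  have hscalar : σ z = μ • LinearMap.id :=
    LinearMap.ext fun w => Subtype.ext (End.mem_eigenspace_iff.1 w.2)
  have hdet : LinearMap.det (σ z) = 1 :=
    congrArg Units.val
      (Abelianization.commutator_subset_ker (LinearMap.det.comp σ).toHomUnits hcomm)
  rwa [hscalar, LinearMap.det_smul, LinearMap.det_id, mul_one] at hdet

variable [FiniteDimensional K V]

theorem pow_factorial_finrank_eq_one_of_hasEigenvalue (ρ : Representation K G V) {z : G}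
    (hcenter : z ∈ Subgroup.center G) (hcomm : z ∈ commutator G) {μ : K}
    (hμ : End.HasEigenvalue (ρ z) μ) : μ ^ (finrank K V).factorial = 1 := by
  have hdvd : finrank K (End.eigenspace (ρ z) μ) ∣ (finrank K V).factorial :=
    Nat.dvd_factorial (Submodule.one_le_finrank_iff.2 hμ) (Submodule.finrank_le _)
  obtain ⟨k, hk⟩ := hdvd
  rw [hk, pow_mul, pow_finrank_eigenspace_eq_one ρ hcenter hcomm, one_pow]

theorem isNilpotent_aeval_of_hasEigenvalue_isRoot {f : End K V} {p : K[X]}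
    (hf : f.charpoly.Splits) (h : ∀ μ, f.HasEigenvalue μ → p.IsRoot μ) :
    IsNilpotent (aeval f p) := by
  have hroots : ∀ μ ∈ f.charpoly.roots, X - C μ ∣ p := fun μ hμ =>
    dvd_iff_isRoot.2 (h μ ((End.hasEigenvalue_iff_isRoot_charpoly f μ).2 (isRoot_of_mem_roots hμ)))
  have hdvd : f.charpoly ∣ p ^ f.charpoly.roots.card := by
    conv_lhs => rw [hf.eq_prod_roots_of_monic f.charpoly_monic]
    simpa using Multiset.prod_dvd_prod_of_dvd _ (fun _ => p) hroots
  refine ⟨f.charpoly.roots.card, ?_⟩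
  rw [← map_pow]
  exact aeval_eq_zero_of_dvd_aeval_eq_zero hdvd f.aeval_self_charpoly

theorem isNilpotent_pow_factorial_finrank_sub_one (ρ : Representation K G V) {z : G}
    (hcenter : z ∈ Subgroup.center G) (hcomm : z ∈ commutator G) :
    IsNilpotent (ρ z ^ (finrank K V).factorial - 1) := by
  let L := AlgebraicClosure K
  let e : End K V →ₐ[K] End L (L ⊗[K] V) := End.baseChangeHom K L V
  have he : Function.Injective e := LinearMap.baseChangeHom_injective K V L
  have hnil : IsNilpotent (aeval (e (ρ z)) (X ^ (finrank K V).factorial - 1 : L[X])) := by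
    refine isNilpotent_aeval_of_hasEigenvalue_isRoot (IsAlgClosed.splits _) fun μ hμ => ?_
    have := pow_factorial_finrank_eq_one_of_hasEigenvalue
      ((e : End K V →* End L (L ⊗[K] V)).comp ρ) hcenter hcomm hμ
    rw [finrank_baseChange] at this
    simp [this]
  rw [← IsNilpotent.map_iff he]
  simpa using hnil

variable {ρ : Representation K G V}

theorem IsUnipotentFree.pow_factorial_finrank_eq_one (hρ : IsUnipotentFree ρ) {z : G}
    (hcenter : z ∈ Subgroup.center G) (hcomm : z ∈ commutator G) :
    z ^ (finrank K V).factorial = 1 :=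
  hρ _ (by simpa using isNilpotent_pow_factorial_finrank_sub_one ρ hcenter hcomm)

theorem IsUnipotentFree.finite_center_inf_commutator (hρ : IsUnipotentFree ρ) :
    Finite (Subgroup.center G ⊓ commutator G : Subgroup G) := by
  have hroots := (hρ.comp_injective (Subgroup.center G).subtype_injective)
    |>.finite_setOf_aeval_eq_zero (monic_X_pow_sub_C (1 : K)
      (Nat.factorial_ne_zero (finrank K V))).ne_zero
  refine (hroots.image (Subgroup.center G).subtype).subset fun z hz => ?_
  refine ⟨⟨z, hz.1⟩, ?_, rfl⟩
  have := hρ.pow_factorial_finrank_eq_one hz.1 hz.2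
  have hz' : ρ z ^ (finrank K V).factorial = 1 := by rw [← map_pow, this, map_one]
  simp [hz']

theorem IsUnipotentFree.finite_commutator (hρ : IsUnipotentFree ρ)
    [(Subgroup.center G).IsFiniteRelIndex (commutator G)] : Finite (commutator G) := by
  have := hρ.finite_center_inf_commutator
  have hfin : Finite ((Subgroup.center G).subgroupOf (commutator G)) := by
    rw [← Subgroup.inf_subgroupOf_right]
    exact .of_equiv _ (Subgroup.subgroupOfEquivOfLe inf_le_right).symm.toEquiv
  exact (Subgroup.finite_iff_finite_and_finiteIndex
    ((Subgroup.center G).subgroupOf (commutator G))).2 ⟨hfin, inferInstance⟩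

end CentralCommutators

theorem map_subtype_derivedSeries_commutator (G : Type*) [Group G] (n : ℕ) :
    (derivedSeries (commutator G) n).map (commutator G).subtype = derivedSeries G (n + 1) := by
  induction n with
  | zero => simp [← MonoidHom.range_eq_map]
  | succ n ih => rw [derivedSeries_succ, Subgroup.map_commutator, ih, ← derivedSeries_succ]

section VirtuallySolvable

open Module

variable {K V G : Type*} [Field K] [AddCommGroup V] [Module K V] [FiniteDimensional K V] [Group G]
  {ρ : Representation K G V}

theorem IsUnipotentFree.isVirtuallyAbelian_of_isFiniteRelIndex_center (hρ : IsUnipotentFree ρ)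
    [(Subgroup.center G).IsFiniteRelIndex (commutator G)] : IsVirtuallyAbelian G := by
  have := hρ.finite_commutator
  have : (fcCenter G).FiniteIndex := by
    rw [fcCenter_eq_top_of_finite_commutator]
    infer_instance
  obtain ⟨N, -, hindex, hcomm⟩ :=
    exists_characteristic_isMulCommutative_of_finiteIndex_fcCenter K hρ.injective
  exact ⟨N, hindex, mul_comm'⟩

theorem IsUnipotentFree.isVirtuallyAbelian_of_commutator (hρ : IsUnipotentFree ρ)
    (h : IsVirtuallyAbelian (commutator G)) : IsVirtuallyAbelian G := by
  obtain ⟨N, hnormal, hcomm, hindex⟩ :=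
    exists_normal_isMulCommutative_isFiniteRelIndex K hρ.injective h
  let C := Subgroup.centralizer (N : Set G)
  have : C.FiniteIndex :=
    finiteIndex_centralizer_of_subset_fcCenter K hρ.injective (hρ.le_fcCenter_of_normal K)
  have hcenter : N.subgroupOf C ≤ Subgroup.center C := fun s hs =>
    Subgroup.mem_center_iff.2 fun c => Subtype.ext (c.2 s hs).symm
  have hle : (commutator C).map C.subtype ≤ commutator G := by
    rw [Subgroup.map_subtype_commutator]
    exact Subgroup.commutator_mono le_top le_top
  have : (N.subgroupOf C).IsFiniteRelIndex (commutator C) := by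
    rw [Subgroup.isFiniteRelIndex_iff_relIndex_ne_zero, Subgroup.subgroupOf,
      Subgroup.relIndex_comap]
    exact (Subgroup.isFiniteRelIndex_of_le_right _ hle).relIndex_ne_zero
  have : (Subgroup.center C).IsFiniteRelIndex (commutator C) :=
    Subgroup.isFiniteRelIndex_of_le_left _ hcenter
  exact .of_finiteIndex
    (hρ.comp_injective C.subtype_injective).isVirtuallyAbelian_of_isFiniteRelIndex_center

theorem IsUnipotentFree.isVirtuallyAbelian_of_derivedSeries_eq_bot (hρ : IsUnipotentFree ρ) {n : ℕ}
    (hn : derivedSeries G n = ⊥) : IsVirtuallyAbelian G := by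
  induction n generalizing G with
  | zero =>
    have : Subsingleton G := Subgroup.subsingleton_iff.1 (subsingleton_of_bot_eq_top hn.symm)
    exact ⟨⊤, inferInstance, fun _ _ => Subsingleton.elim _ _⟩
  | succ n ih =>
    have hcomm : derivedSeries (commutator G) n = ⊥ := by
      rw [← Subgroup.map_eq_bot_iff_of_injective _ (commutator G).subtype_injective,
        map_subtype_derivedSeries_commutator, hn]
    exact hρ.isVirtuallyAbelian_of_commutator
      (ih (hρ.comp_injective (commutator G).subtype_injective) hcomm)

end VirtuallySolvable

theorem stmt_16_general {K V G : Type*} [Field K] [AddCommGroup V] [Module K V]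
    [FiniteDimensional K V] [Group G] {ρ : Representation K G V} (hρ : IsUnipotentFree ρ)
    (hsolv : IsVirtuallySolvable G) : IsVirtuallyAbelian G := by
  obtain ⟨H, hindex, ⟨n, hn⟩⟩ := hsolv
  exact .of_finiteIndex
    ((hρ.comp_injective H.subtype_injective).isVirtuallyAbelian_of_derivedSeries_eq_bot hn)

/-- A virtually solvable anisotropic linear group over a field of characteristic zero is
virtually abelian. -/
theorem stmt_16 {K : Type*} [Field K] [CharZero K] {n : ℕ} (hn : 1 ≤ n)
    (Γ : Subgroup (GL (Fin n) K)) (hani : ∀ g ∈ Γ, IsSemisimpleElt g)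
    (hsolv : IsVirtuallySolvable ↥Γ) :
    IsVirtuallyAbelian ↥Γ := by
  let ρ : Representation K Γ (Fin n → K) :=
    (Matrix.toLinAlgEquiv' : Matrix (Fin n) (Fin n) K ≃ₐ[K] _).toMonoidHom.comp
      ((Units.coeHom _).comp Γ.subtype)
  have hinj : Function.Injective ρ :=
    Matrix.toLinAlgEquiv'.injective.comp (Units.val_injective.comp Γ.subtype_injective)
  exact stmt_16_general (isUnipotentFree_of_isSemisimple hinj fun g => hani g g.2) hsolv
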